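/- Let K be a field containing the roots e₁,…,e_n of a separable polynomial P, and consider the surface X: u₁u₂ = P(t) over K with U = {P(t) ≠ 0} ⊂ X. The group O(U)*/K* is a free abelian group of rank n+1, generated by the classes of t−e₁,…,t−e_n, u₁, u₂, subject to the single relation [u₁] + [u₂] = Σ_{j=1}^{n} [t−e_j]. -/

import Mathlib

open MvPolynomial

/-!
Since `u₂ = P(t)/u₁` on `U`, the ring `O(U)` is `K[t][u₁]` with `u₁P(t)` inverted. The prime factors
of `u₁P(t)` are `u₁` and the `t - e_j`, which are pairwise non-associated. Units of a localization
of a domain at a product of such primes are, modulo units of the domain, free abelian on the primes,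
and the units of `K[t][u₁]` are constants. So `[u₁], [t - e₁], …, [t - e_n]` is a basis of
`O(U)*/K*`, and `u₁u₂ = P` expresses the remaining generator as `[u₂] = Σ_j [t - e_j] - [u₁]`.
-/

open scoped Polynomial

section PrimeFactors

variable {ι B : Type*} [CommRing B] [IsDomain B] {p : ι → B}

theorem exists_subset_associated_prod_of_dvd_prod_prime (hp : ∀ i, Prime (p i)) {s : Finset ι}
    {x : B} (hx : x ∣ ∏ i ∈ s, p i) : ∃ t ⊆ s, Associated (∏ i ∈ t, p i) x := by
  classical
  obtain ⟨y, hxy⟩ := hx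
  obtain ⟨t, u, b, c, rfl, -, hbc, rfl, -⟩ :=
    mul_eq_mul_prime_prod (a := 1) (fun i _ => hp i) (hxy.symm.trans (one_mul _).symm)
  refine ⟨t, Finset.subset_union_left, ?_⟩
  exact associated_unit_mul_right _ b (.of_mul_eq_one c hbc.symm)

variable [Fintype ι]

theorem emultiplicity_prod_pow_of_not_associated (hp : ∀ i, Prime (p i))
    (hassoc : ∀ i j, Associated (p i) (p j) → i = j) (m : ι → ℕ) (i : ι) :
    emultiplicity (p i) (∏ j, p j ^ m j) = m i := by
  rw [Finset.emultiplicity_prod (hp i), Finset.sum_eq_single i]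
  · exact emultiplicity_pow_self_of_prime (hp i) (m i)
  · intro j _ hji
    have hdvd : ¬ p i ∣ p j := fun h =>
      hji (hassoc i j (((hp i).dvd_prime_iff_associated (hp j)).1 h)).symm
    rw [emultiplicity_eq_zero]
    exact fun h => hdvd ((hp i).dvd_of_dvd_pow h)
  · simp

theorem eq_of_associated_prod_pow (hp : ∀ i, Prime (p i))
    (hassoc : ∀ i j, Associated (p i) (p j) → i = j) {m k : ι → ℕ}
    (h : Associated (∏ i, p i ^ m i) (∏ i, p i ^ k i)) : m = k := by
  ext i
  have := emultiplicity_eq_of_associated_right (a := p i) h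
  simpa only [emultiplicity_prod_pow_of_not_associated hp hassoc, Nat.cast_inj] using this

end PrimeFactors

section UnitsOfLocalization

variable {ι B S : Type*} [Fintype ι] [CommRing B] [IsDomain B] [CommRing S] [Algebra B S]
  {p : ι → B} {v : ι → Sˣ}

theorem eq_zero_of_prod_zpow_mem_range_units_map
    (hinj : Function.Injective (algebraMap B S)) (hp : ∀ i, Prime (p i))
    (hassoc : ∀ i j, Associated (p i) (p j) → i = j) (hv : ∀ i, (v i : S) = algebraMap B S (p i))
    {x : ι → ℤ} (hx : ∏ i, v i ^ x i ∈ (Units.map (algebraMap B S : B →* S)).range) :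
    x = 0 := by
  obtain ⟨r, hr⟩ := hx
  have hsplit : ∏ i, v i ^ (x i).toNat =
      (∏ i, v i ^ (-x i).toNat) * Units.map (algebraMap B S : B →* S) r := by
    rw [hr, ← Finset.prod_mul_distrib]
    refine Finset.prod_congr rfl fun i _ => ?_
    rw [← zpow_natCast, ← zpow_natCast, ← zpow_add]
    congr 1
    lia
  have hassoc' : Associated (∏ i, p i ^ (-x i).toNat) (∏ i, p i ^ (x i).toNat) := by
    refine ⟨r, hinj ?_⟩
    simpa [hv] using (congrArg Units.val hsplit).symm
  have hparts := eq_of_associated_prod_pow hp hassoc hassoc'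
  ext i
  have := congrFun hparts i
  simp only [Pi.zero_apply]
  lia

omit [Fintype ι] in
theorem linearIndependent_ofMul_units [Finite ι] {G : Type*} [CommGroup G] {π : Sˣ →* G}
    (hπ : π.ker ≤ (Units.map (algebraMap B S : B →* S)).range)
    (hinj : Function.Injective (algebraMap B S)) (hp : ∀ i, Prime (p i))
    (hassoc : ∀ i j, Associated (p i) (p j) → i = j)
    (hv : ∀ i, (v i : S) = algebraMap B S (p i)) :
    LinearIndependent ℤ fun i => Additive.ofMul (π (v i)) := by
  cases nonempty_fintype ι
  rw [Fintype.linearIndependent_iff]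
  intro x hx
  refine congrFun (eq_zero_of_prod_zpow_mem_range_units_map hinj hp hassoc hv (hπ ?_))
  rw [MonoidHom.mem_ker]
  simpa only [← ofMul_zpow, ← ofMul_prod, ← map_zpow, ← map_prod, ofMul_eq_zero] using hx

theorem exists_eq_prod_mul_of_isLocalization_away [IsLocalization.Away (∏ i, p i) S]
    (hp : ∀ i, Prime (p i)) (hv : ∀ i, (v i : S) = algebraMap B S (p i)) (s : Sˣ) :
    ∃ (r : Bˣ) (t : Finset (ℕ × ι)) (m : ℕ),
      s * (∏ i, v i) ^ m = (∏ z ∈ t, v z.2) * Units.map (algebraMap B S : B →* S) r := by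
  obtain ⟨m, x, hx⟩ := IsLocalization.Away.surj (∏ i, p i) (s : S)
  have hval : (s * (∏ i, v i) ^ m : Sˣ) = algebraMap B S x := by
    simpa [hv] using hx
  obtain ⟨k, hk⟩ := (IsLocalization.Away.algebraMap_isUnit_iff (∏ i, p i)).1 (hval ▸ Units.isUnit _)
  have hpow : (∏ i, p i) ^ k = ∏ z ∈ Finset.range k ×ˢ Finset.univ, p z.2 := by
    simp [Finset.prod_product]
  obtain ⟨t, -, r, hr⟩ :=
    exists_subset_associated_prod_of_dvd_prod_prime (fun z : ℕ × ι => hp z.2) (hpow ▸ hk)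
  refine ⟨r, t, m, Units.ext ?_⟩
  rw [hval, ← hr]
  simp [hv]

theorem span_ofMul_units_eq_top {G : Type*} [CommGroup G] {π : Sˣ →* G}
    (hπ : (Units.map (algebraMap B S : B →* S)).range ≤ π.ker) (hsurj : Function.Surjective π)
    [IsLocalization.Away (∏ i, p i) S] (hp : ∀ i, Prime (p i))
    (hv : ∀ i, (v i : S) = algebraMap B S (p i)) :
    Submodule.span ℤ (Set.range fun i => Additive.ofMul (π (v i))) = ⊤ := by
  set M := Submodule.span ℤ (Set.range fun i => Additive.ofMul (π (v i)))
  have hmem (i : ι) : Additive.ofMul (π (v i)) ∈ M := Submodule.subset_span ⟨i, rfl⟩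
  refine eq_top_iff.2 fun y _ => ?_
  obtain ⟨s, hs⟩ := hsurj y.toMul
  obtain ⟨r, t, m, h⟩ := exists_eq_prod_mul_of_isLocalization_away hp hv s
  have hr : π (Units.map (algebraMap B S : B →* S) r) = 1 := hπ ⟨r, rfl⟩
  have hy : y = ∑ z ∈ t, Additive.ofMul (π (v z.2)) - m • ∑ i, Additive.ofMul (π (v i)) := by
    rw [eq_sub_iff_add_eq]
    simpa [hr, hs] using congrArg (fun u => Additive.ofMul (π u)) h
  rw [hy]
  exact M.sub_mem (M.sum_mem fun z _ => hmem z.2) (M.nsmul_mem (M.sum_mem fun i _ => hmem i) m)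

variable {G : Type*} [CommGroup G] {π : Sˣ →* G} [IsLocalization.Away (∏ i, p i) S]
  (hp : ∀ i, Prime (p i)) (hassoc : ∀ i j, Associated (p i) (p j) → i = j)
  (hv : ∀ i, (v i : S) = algebraMap B S (p i))
  (hπ : π.ker = (Units.map (algebraMap B S : B →* S)).range) (hsurj : Function.Surjective π)

/-- The basis of `Sˣ / Bˣ` formed by the classes of the primes `p i`, where `S` is `B` with these
primes inverted. The quotient is given by a surjection `π` from `Sˣ` with kernel the image of `Bˣ`,
and is written additively. -/
noncomputable def unitsBasis : Module.Basis ι ℤ (Additive G) :=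
  have hinj : Function.Injective (algebraMap B S) :=
    IsLocalization.injective S (M := .powers (∏ i, p i)) <|
      powers_le_nonZeroDivisors_of_noZeroDivisors <|
        Finset.prod_ne_zero_iff.2 fun i _ => (hp i).ne_zero
  .mk (linearIndependent_ofMul_units hπ.le hinj hp hassoc hv)
    (span_ofMul_units_eq_top hπ.ge hsurj hp hv).ge

theorem unitsBasis_apply (i : ι) :
    unitsBasis hp hassoc hv hπ hsurj i = Additive.ofMul (π (v i)) := by
  simp [unitsBasis]

end UnitsOfLocalization

section Presentation

variable {R M ι : Type*} [CommRing R] [AddCommGroup M] [Module R M] [Fintype ι]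

/-- The map `R^ι × R × R → M` sending the standard generators to `α j`, `β₁` and `β₂`. -/
def relationMap (α : ι → M) (β₁ β₂ : M) : (ι → R) × R × R →ₗ[R] M :=
  (Fintype.linearCombination R α).coprod
    ((LinearMap.toSpanSingleton R M β₁).coprod (LinearMap.toSpanSingleton R M β₂))

theorem relationMap_apply (α : ι → M) (β₁ β₂ : M) (x : ι → R) (y z : R) :
    relationMap α β₁ β₂ (x, y, z) = ∑ j, x j • α j + (y • β₁ + z • β₂) := rfl

variable (b : Module.Basis (Option ι) R M) {β : M}

theorem relationMap_eq_sum (hβ : b none + β = ∑ j, b (some j)) (x : ι → R) (y z : R) :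
    relationMap (fun j => b (some j)) (b none) β (x, y, z) =
      ∑ o, o.elim (y - z) (fun j => x j + z) • b o := by
  rw [relationMap_apply, Fintype.sum_option, eq_sub_of_add_eq' hβ]
  simp only [Option.elim, add_smul, Finset.sum_add_distrib, ← Finset.smul_sum, sub_smul, smul_sub]
  abel

theorem relationMap_surjective (hβ : b none + β = ∑ j, b (some j)) :
    Function.Surjective (relationMap (R := R) (fun j => b (some j)) (b none) β) := by
  intro m
  refine ⟨(fun j => b.repr m (some j), b.repr m none, 0), ?_⟩
  rw [relationMap_eq_sum b hβ, ← b.sum_repr m]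
  refine Finset.sum_congr rfl ?_
  rintro (_ | j) _ <;> simp

theorem ker_relationMap (hβ : b none + β = ∑ j, b (some j)) :
    LinearMap.ker (relationMap (R := R) (fun j => b (some j)) (b none) β) =
      Submodule.span R {((fun _ => 1 : ι → R), (-1 : R), (-1 : R))} := by
  ext ⟨x, y, z⟩
  rw [LinearMap.mem_ker, relationMap_eq_sum b hβ, Submodule.mem_span_singleton]
  constructor
  · intro h
    have hcoeff := Fintype.linearIndependent_iff.1 b.linearIndependent _ h
    have hy : y = z := sub_eq_zero.1 (hcoeff none)
    have hx (j : ι) : x j = -z := eq_neg_of_add_eq_zero_left (hcoeff (some j))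
    exact ⟨-z, by ext <;> simp [hx, hy]⟩
  · rintro ⟨r, h⟩
    obtain ⟨rfl, rfl, rfl⟩ : (fun _ => r) = x ∧ -r = y ∧ -r = z := by
      simpa [Prod.ext_iff, funext_iff] using h
    simp [Fintype.sum_option]

end Presentation

theorem exists_presentation_of_basis {ι M : Type*} [Fintype ι] [DecidableEq ι]
    [AddCommGroup M] (b : Module.Basis (Option ι) ℤ M) {β : M} (hβ : b none + β = ∑ j, b (some j)) :
    ∃ φ : ((ι → ℤ) × ℤ × ℤ) →+ M,
      (∀ j, φ (Pi.single j 1, 0, 0) = b (some j)) ∧ φ (0, 1, 0) = b none ∧ φ (0, 0, 1) = β ∧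
      Function.Surjective φ ∧
      φ.ker = AddSubgroup.zmultiples (((fun _ => 1) : ι → ℤ), (-1 : ℤ), (-1 : ℤ)) := by
  refine ⟨(relationMap (R := ℤ) (fun j => b (some j)) (b none) β).toAddMonoidHom, fun j => ?_,
    ?_, ?_, relationMap_surjective b hβ, ?_⟩
  · simp [relationMap_apply, Pi.single_apply]
  · simp [relationMap_apply]
  · simp [relationMap_apply]
  · rw [← Submodule.span_singleton_toAddSubgroup_eq_zmultiples, ← ker_relationMap b hβ]
    rfl

section RootFactor

variable {R ι : Type*} [CommRing R]

theorem units_map_C_surjective [NoZeroDivisors R] :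
    Function.Surjective (Units.map ((Polynomial.C : R →+* R[X]) : R →* R[X])) := by
  intro u
  obtain ⟨r, hr, hru⟩ := Polynomial.isUnit_iff.1 u.isUnit
  exact ⟨hr.unit, Units.ext hru⟩

theorem range_units_map_comp_C_comp_C [NoZeroDivisors R] {S : Type*} [CommRing S]
    (f : R[X][X] →+* S) :
    (Units.map (f.comp (Polynomial.C.comp Polynomial.C) : R →+* S).toMonoidHom).range =
      (Units.map (f : R[X][X] →* S)).range := by
  have hfactor : Units.map (f.comp (Polynomial.C.comp Polynomial.C) : R →+* S).toMonoidHom =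
      (Units.map (f : R[X][X] →* S)).comp
        ((Units.map ((Polynomial.C : R[X] →+* R[X][X]) : R[X] →* R[X][X])).comp
          (Units.map ((Polynomial.C : R →+* R[X]) : R →* R[X]))) := rfl
  rw [hfactor, MonoidHom.range_comp, MonoidHom.range_eq_top.2, ← MonoidHom.range_eq_map]
  exact units_map_C_surjective.comp units_map_C_surjective

/-- The factors of `u(t - e₁)⋯(t - e_n)` in `R[t][u]`: `none` indexes the outer variable `u`, and
`some j` indexes `t - e_j`. -/
noncomputable def rootFactor (e : ι → R) : Option ι → R[X][X]
  | none => Polynomial.X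
  | some j => Polynomial.C (Polynomial.X - Polynomial.C (e j))

theorem associated_X_mul_C_prod_rootFactor [Fintype ι] {c : R} (hc : IsUnit c) (e : ι → R) :
    Associated (Polynomial.X * Polynomial.C
        (Polynomial.C c * ∏ j, (Polynomial.X - Polynomial.C (e j))))
      (∏ o, rootFactor e o) := by
  have hunit : IsUnit (Polynomial.C (Polynomial.C c)) := (hc.map Polynomial.C).map Polynomial.C
  rw [Fintype.prod_option, map_mul, map_prod]
  exact (associated_unit_mul_left _ _ hunit).mul_left _

theorem prime_rootFactor [IsDomain R] (e : ι → R) : ∀ o, Prime (rootFactor e o)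
  | none => Polynomial.prime_X
  | some j => Polynomial.prime_C_iff.2 (Polynomial.prime_X_sub_C (e j))

variable [Nontrivial R]

theorem not_associated_X_C_X_sub_C (r : R) :
    ¬ Associated (Polynomial.X : R[X][X]) (Polynomial.C (Polynomial.X - Polynomial.C r)) := by
  intro h
  have := h.dvd
  rw [Polynomial.X_dvd_iff, Polynomial.coeff_C_zero] at this
  exact Polynomial.X_sub_C_ne_zero r this

theorem eq_of_associated_rootFactor {e : ι → R} (he : Function.Injective e) :
    ∀ o o', Associated (rootFactor e o) (rootFactor e o') → o = o'
  | none, none, _ => rfl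
  | none, some j, h => (not_associated_X_C_X_sub_C (e j) h).elim
  | some i, none, h => (not_associated_X_C_X_sub_C (e i) h.symm).elim
  | some i, some j, h => by
    have hdvd : (Polynomial.X - Polynomial.C (e i)) ∣ (Polynomial.X - Polynomial.C (e j)) := by
      simpa [rootFactor] using (Polynomial.C_dvd_iff_dvd_coeff _ _).1 h.dvd 0
    rw [Polynomial.dvd_iff_isRoot, Polynomial.root_X_sub_C] at hdvd
    exact congrArg some (he hdvd.symm)

end RootFactor

section Surface

variable {K : Type*} [CommRing K]

/-- The coordinate ring `K[u₁, u₂, t] / (u₁u₂ - p(t))` of the affine Châtelet surface, with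
`u₁ = X 0`, `u₂ = X 1` and `t = X 2`. -/
abbrev ChateletRing (p : K[X]) : Type _ :=
  MvPolynomial (Fin 3) K ⧸
    Ideal.span {X 0 * X 1 - Polynomial.aeval (X 2 : MvPolynomial (Fin 3) K) p}

namespace ChateletRing

/-- The projection from the polynomial ring `K[u₁, u₂, t]`. -/
noncomputable abbrev mk (p : K[X]) : MvPolynomial (Fin 3) K →+* ChateletRing p :=
  Ideal.Quotient.mk _

/-- The map `K[t][u] → ChateletRing p` forgetting `u₂`: the outer variable goes to `u₁`, the inner
one to `t`. -/
noncomputable instance (p : K[X]) : Algebra K[X][X] (ChateletRing p) :=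
  ((mk p).comp
    (Polynomial.eval₂RingHom (Polynomial.aeval (X 2)).toRingHom (X 0))).toAlgebra

variable (p : K[X])

theorem algebraMap_X : algebraMap K[X][X] (ChateletRing p) Polynomial.X = mk p (X 0) := by
  simp [RingHom.algebraMap_toAlgebra]

theorem algebraMap_C (q : K[X]) :
    algebraMap K[X][X] (ChateletRing p) (Polynomial.C q) =
      mk p (Polynomial.aeval (X 2) q) := by
  simp [RingHom.algebraMap_toAlgebra]

theorem algebraMap_C_C (k : K) :
    algebraMap K[X][X] (ChateletRing p) (Polynomial.C (Polynomial.C k)) = algebraMap K _ k := by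
  rw [algebraMap_C, Polynomial.aeval_C]
  rfl

theorem mk_X_zero_mul_mk_X_one :
    mk p (X 0) * mk p (X 1) = mk p (Polynomial.aeval (X 2) p) :=
  Ideal.Quotient.eq.2 (Ideal.mem_span_singleton_self _)

variable {p} {A : Type*} [CommRing A] [Algebra K[X][X] A]

theorem algHom_ext_of_isUnit (hX : IsUnit (algebraMap K[X][X] A Polynomial.X))
    (f g : ChateletRing p →ₐ[K[X][X]] A) : f = g := by
  have hf (f : ChateletRing p →ₐ[K[X][X]] A) :
      algebraMap K[X][X] A Polynomial.X * f (mk p (X 1)) =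
        algebraMap K[X][X] A (Polynomial.C p) := by
    rw [← f.commutes, ← f.commutes, ← map_mul, algebraMap_X, algebraMap_C, mk_X_zero_mul_mk_X_one]
  have hbase (q : K[X][X]) : f (algebraMap _ _ q) = g (algebraMap _ _ q) := by
    rw [f.commutes, g.commutes]
  apply AlgHom.coe_ringHom_injective
  apply Ideal.Quotient.ringHom_ext
  apply MvPolynomial.ringHom_ext
  · intro k
    simpa [algebraMap_C] using hbase (Polynomial.C (Polynomial.C k))
  · intro i
    fin_cases i
    · simpa [algebraMap_X] using hbase Polynomial.X
    · exact hX.mul_left_cancel ((hf f).trans (hf g).symm)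
    · simpa [algebraMap_C] using hbase (Polynomial.C Polynomial.X)

theorem nonempty_algHom_of_isUnit (hX : IsUnit (algebraMap K[X][X] A Polynomial.X)) :
    Nonempty (ChateletRing p →ₐ[K[X][X]] A) := by
  obtain ⟨y, hy⟩ := hX.exists_right_inv
  let θ : MvPolynomial (Fin 3) K →+* A :=
    eval₂Hom ((algebraMap K[X][X] A).comp (Polynomial.C.comp Polynomial.C))
      ![algebraMap K[X][X] A Polynomial.X, y * algebraMap K[X][X] A (Polynomial.C p),
        algebraMap K[X][X] A (Polynomial.C Polynomial.X)]
  have hθ₀ : θ (X 0) = algebraMap K[X][X] A Polynomial.X := by simp [θ]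
  have hθ₁ : θ (X 1) = y * algebraMap K[X][X] A (Polynomial.C p) := by simp [θ]
  have hθ (q : K[X]) : θ (Polynomial.aeval (X 2) q) = algebraMap K[X][X] A (Polynomial.C q) := by
    suffices θ.comp (Polynomial.aeval (X 2 : MvPolynomial (Fin 3) K)).toRingHom =
        (algebraMap K[X][X] A).comp Polynomial.C from RingHom.congr_fun this q
    apply Polynomial.ringHom_ext <;> simp [θ]
  have hle : Ideal.span {X 0 * X 1 - Polynomial.aeval (X 2 : MvPolynomial (Fin 3) K) p} ≤
      RingHom.ker θ := by
    rw [Ideal.span_singleton_le_iff_mem, RingHom.mem_ker, map_sub, map_mul, hθ, hθ₀, hθ₁,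
      ← mul_assoc, hy, one_mul, sub_self]
  let θ' : ChateletRing p →+* A := Ideal.Quotient.lift _ θ fun _ h => RingHom.mem_ker.1 (hle h)
  have hθ' (q : MvPolynomial (Fin 3) K) : θ' (mk p q) = θ q := rfl
  have hcomp : θ'.comp (algebraMap K[X][X] (ChateletRing p)) = algebraMap K[X][X] A := by
    apply Polynomial.ringHom_ext
    · intro q
      rw [RingHom.comp_apply, algebraMap_C, hθ', hθ]
    · rw [RingHom.comp_apply, algebraMap_X, hθ', hθ₀]
  exact ⟨{ θ' with commutes' := RingHom.congr_fun hcomp }⟩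

section Localization

variable {S : Type*} [CommRing S] [Algebra (ChateletRing p) S]
  [IsLocalization.Away (mk p (Polynomial.aeval (X 2) p)) S]

variable (p S) in
theorem isUnit_algebraMap_mk_X_zero : IsUnit (algebraMap (ChateletRing p) S (mk p (X 0))) :=
  IsLocalization.Away.isUnit_of_dvd (mk p (Polynomial.aeval (X 2) p))
    ⟨_, (mk_X_zero_mul_mk_X_one p).symm⟩

variable [Algebra K[X][X] S] [IsScalarTower K[X][X] (ChateletRing p) S]

theorem isLocalization_away :
    IsLocalization.Away (Polynomial.X * Polynomial.C p : K[X][X]) S := by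
  set w : K[X][X] := Polynomial.X * Polynomial.C p
  set f : ChateletRing p := mk p (Polynomial.aeval (X 2) p)
  have hf : algebraMap K[X][X] (ChateletRing p) (Polynomial.C p) = f := algebraMap_C p p
  let T := Localization.Away w
  have hXT : IsUnit (algebraMap K[X][X] T Polynomial.X) :=
    IsLocalization.Away.isUnit_of_dvd w (dvd_mul_right _ _)
  have hXS : IsUnit (algebraMap K[X][X] S Polynomial.X) := by
    rw [IsScalarTower.algebraMap_apply K[X][X] (ChateletRing p) S, algebraMap_X]
    exact isUnit_algebraMap_mk_X_zero p S
  have hwS : IsUnit (algebraMap K[X][X] S w) := by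
    rw [map_mul]
    refine hXS.mul ?_
    rw [IsScalarTower.algebraMap_apply K[X][X] (ChateletRing p) S, hf]
    exact IsLocalization.Away.algebraMap_isUnit f
  obtain ⟨θ⟩ := nonempty_algHom_of_isUnit (p := p) hXT
  have hfT : IsUnit (θ f) := by
    rw [← hf, θ.commutes]
    exact IsLocalization.Away.isUnit_of_dvd w (dvd_mul_left _ _)
  let τ : S →ₐ[K[X][X]] T := IsLocalization.Away.liftAlgHom f hfT
  let σ : T →ₐ[K[X][X]] S := IsLocalization.Away.liftAlgHom (f := Algebra.ofId K[X][X] S) w hwS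
  have hτσ : τ.comp σ = AlgHom.id _ T :=
    (IsLocalization.algHom_subsingleton (Submonoid.powers w)).elim _ _
  have hστ : σ.comp τ = AlgHom.id _ S :=
    IsLocalization.algHom_ext (Submonoid.powers f) (algHom_ext_of_isUnit hXS _ _)
  exact IsLocalization.isLocalization_of_algEquiv (Submonoid.powers w)
    (AlgEquiv.ofAlgHom σ τ hστ hτσ)

end Localization

variable {ι : Type*}

theorem algebraMap_rootFactor (p : K[X]) (e : ι → K) (o : Option ι) :
    algebraMap K[X][X] (ChateletRing p) (rootFactor e o) =
      mk p (o.elim (X 0) fun j => X 2 - C (e j)) := by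
  cases o <;> simp [rootFactor, algebraMap_X, algebraMap_C, MvPolynomial.algebraMap_eq]

variable {S : Type*} [CommRing S] [Algebra (ChateletRing p) S]

theorem range_units_map_algebraMap_comp_algebraMap [NoZeroDivisors K] [Algebra K[X][X] S]
    [IsScalarTower K[X][X] (ChateletRing p) S] :
    (Units.map ((algebraMap (ChateletRing p) S).comp
      (algebraMap K (ChateletRing p))).toMonoidHom).range =
      (Units.map (algebraMap K[X][X] S : K[X][X] →* S)).range := by
  have hcomp : (algebraMap (ChateletRing p) S).comp (algebraMap K (ChateletRing p)) =
      (algebraMap K[X][X] S).comp (Polynomial.C.comp Polynomial.C) := by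
    ext k
    simp only [RingHom.comp_apply]
    rw [IsScalarTower.algebraMap_apply K[X][X] (ChateletRing p) S, algebraMap_C_C]
  rw [hcomp, range_units_map_comp_C_comp_C]

variable [Fintype ι] {c : K} {e : ι → K} {a : ι → Sˣ} {b₁ b₂ : Sˣ} {G : Type*} [CommGroup G]
  {π : Sˣ →* G}

theorem ofMul_map_add_ofMul_map_eq_sum (hc : IsUnit c)
    (hp : p = Polynomial.C c * ∏ j, (Polynomial.X - Polynomial.C (e j)))
    (ha : ∀ j, (a j : S) = algebraMap (ChateletRing p) S (mk p (X 2 - C (e j))))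
    (hb₁ : (b₁ : S) = algebraMap (ChateletRing p) S (mk p (X 0)))
    (hb₂ : (b₂ : S) = algebraMap (ChateletRing p) S (mk p (X 1)))
    (hπ : (Units.map ((algebraMap (ChateletRing p) S).comp
      (algebraMap K (ChateletRing p))).toMonoidHom).range ≤ π.ker) :
    Additive.ofMul (π b₁) + Additive.ofMul (π b₂) = ∑ j, Additive.ofMul (π (a j)) := by
  set κ := (algebraMap (ChateletRing p) S).comp (algebraMap K (ChateletRing p))
  have hsplit : Polynomial.aeval (X 2 : MvPolynomial (Fin 3) K) p =
      C c * ∏ j, (X 2 - C (e j)) := by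
    simp [hp, map_prod, MvPolynomial.algebraMap_eq]
  have hmk : mk p (X 0) * mk p (X 1) = mk p (C c) * ∏ j, mk p (X 2 - C (e j)) :=
    (mk_X_zero_mul_mk_X_one p).trans <| (congrArg (mk p) hsplit).trans <| by
      rw [map_mul, map_prod]
  have hrel : b₁ * b₂ = Units.map κ.toMonoidHom hc.unit * ∏ j, a j := by
    ext
    calc (b₁ * b₂ : S) = algebraMap _ S (mk p (C c)) * ∏ j, (a j : S) := by
          simp only [hb₁, hb₂, ha, ← map_mul, ← map_prod, hmk]
      _ = _ := by
          simp only [Units.val_mul, Units.coe_prod]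
          rfl
  have hconst : π (Units.map κ.toMonoidHom hc.unit) = 1 := hπ ⟨_, rfl⟩
  rw [← ofMul_mul, ← ofMul_prod, ← map_mul, hrel, map_mul, hconst, one_mul, map_prod]

theorem exists_basis_units_quotient [IsDomain K]
    [IsLocalization.Away (mk p (Polynomial.aeval (X 2) p)) S]
    (hc : IsUnit c) (he : Function.Injective e)
    (hp : p = Polynomial.C c * ∏ j, (Polynomial.X - Polynomial.C (e j)))
    (ha : ∀ j, (a j : S) = algebraMap (ChateletRing p) S (mk p (X 2 - C (e j))))
    (hb₁ : (b₁ : S) = algebraMap (ChateletRing p) S (mk p (X 0)))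
    (hπ : π.ker = (Units.map ((algebraMap (ChateletRing p) S).comp
      (algebraMap K (ChateletRing p))).toMonoidHom).range) (hsurj : Function.Surjective π) :
    ∃ b : Module.Basis (Option ι) ℤ (Additive G),
      ∀ o, b o = Additive.ofMul (π (o.elim b₁ a)) := by
  let _ : Algebra K[X][X] S :=
    ((algebraMap (ChateletRing p) S).comp (algebraMap K[X][X] (ChateletRing p))).toAlgebra
  have : IsScalarTower K[X][X] (ChateletRing p) S := .of_algebraMap_eq' rfl
  have : IsLocalization.Away (∏ o, rootFactor e o) S :=
    have := isLocalization_away (p := p) (S := S)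
    .of_associated (hp ▸ associated_X_mul_C_prod_rootFactor hc e)
  have hv (o : Option ι) : ((o.elim b₁ a : Sˣ) : S) = algebraMap K[X][X] S (rootFactor e o) := by
    rw [IsScalarTower.algebraMap_apply K[X][X] (ChateletRing p) S, algebraMap_rootFactor]
    cases o with
    | none => exact hb₁
    | some j => exact ha j
  rw [range_units_map_algebraMap_comp_algebraMap] at hπ
  exact ⟨unitsBasis (prime_rootFactor e) (eq_of_associated_rootFactor he) hv hπ hsurj,
    unitsBasis_apply _ _ _ _ _⟩

end ChateletRing

end Surface

theorem units_mod_constants_of_affine_chatelet_general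
    (K : Type*) [CommRing K] [IsDomain K] {ι : Type*} [Fintype ι] [DecidableEq ι]
    (c : K) (hc : IsUnit c) (e : ι → K) (he : Function.Injective e)
    (P : MvPolynomial (Fin 3) K) (hP : P = C c * ∏ j, (X 2 - C (e j)))
    (I : Ideal (MvPolynomial (Fin 3) K)) (hI : I = Ideal.span {X 0 * X 1 - P})
    (S : Type*) [CommRing S] [Algebra (MvPolynomial (Fin 3) K ⧸ I) S]
    [IsLocalization.Away (Ideal.Quotient.mk I P) S]
    (a : ι → Sˣ) (ha : ∀ j, (a j : S) = algebraMap _ _ (Ideal.Quotient.mk I (X 2 - C (e j))))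
    (b₁ b₂ : Sˣ) (hb₁ : (b₁ : S) = algebraMap _ _ (Ideal.Quotient.mk I (X 0)))
    (hb₂ : (b₂ : S) = algebraMap _ _ (Ideal.Quotient.mk I (X 1)))
    (N : Subgroup Sˣ)
    (hN : N = (Units.map ((algebraMap (MvPolynomial (Fin 3) K ⧸ I) S).comp
      (algebraMap K (MvPolynomial (Fin 3) K ⧸ I))).toMonoidHom).range) :
    ∃ φ : ((ι → ℤ) × ℤ × ℤ) →+ Additive (Sˣ ⧸ N),
      (∀ j, φ (Pi.single j 1, 0, 0) = Additive.ofMul (QuotientGroup.mk (a j) : _ ⧸ N)) ∧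
      φ (0, 1, 0) = Additive.ofMul (QuotientGroup.mk b₁ : _ ⧸ N) ∧
      φ (0, 0, 1) = Additive.ofMul (QuotientGroup.mk b₂ : _ ⧸ N) ∧
      Function.Surjective φ ∧
      φ.ker = AddSubgroup.zmultiples (((fun _ => 1) : ι → ℤ), (-1 : ℤ), (-1 : ℤ)) := by
  obtain rfl : P = Polynomial.aeval (X 2)
      (Polynomial.C c * ∏ j, (Polynomial.X - Polynomial.C (e j))) := by
    simp [hP, map_prod, MvPolynomial.algebraMap_eq]
  subst hI
  have hker : (QuotientGroup.mk' N).ker = _ := (QuotientGroup.ker_mk' N).trans hN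
  obtain ⟨b, hb⟩ := ChateletRing.exists_basis_units_quotient (G := Sˣ ⧸ N) hc he rfl ha hb₁ hker
    (QuotientGroup.mk'_surjective N)
  have hβ : b none + Additive.ofMul (QuotientGroup.mk' N b₂) = ∑ j, b (some j) := by
    simp only [hb]
    exact ChateletRing.ofMul_map_add_ofMul_map_eq_sum (G := Sˣ ⧸ N) hc rfl ha hb₁ hb₂ hker.ge
  simpa [hb] using exists_presentation_of_basis (M := Additive (Sˣ ⧸ N)) b hβ

/-- For the surface `X : u₁u₂ = P(t)` with `P(t) = c(t-e₁)⋯(t-e_n)` separable, and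
`U = {P(t) ≠ 0} ⊆ X`, the group `O(U)*/K*` is free abelian of rank `n + 1`,
generated by the classes of `t - e₁, …, t - e_n, u₁, u₂` subject to the single
relation `[u₁] + [u₂] = Σ_j [t - e_j]`.  This is expressed by saying that the
homomorphism from `ℤⁿ × ℤ × ℤ` to `O(U)*/K*` sending the standard generators to
these classes is surjective with kernel exactly the multiples of the single
relation `((1,…,1), -1, -1)`. -/
theorem units_mod_constants_of_affine_chatelet
    (K : Type) [Field K] (n : ℕ) (hn : 0 < n) (c : K) (hc : c ≠ 0)
    (e : Fin n → K) (he : Function.Injective e)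
    (P : MvPolynomial (Fin 3) K)
    (hP : P = C c * ∏ j : Fin n, (X 2 - C (e j)))
    (I : Ideal (MvPolynomial (Fin 3) K))
    (hI : I = Ideal.span {X 0 * X 1 - P})
    (a : Fin n → (Localization.Away (Ideal.Quotient.mk I P))ˣ)
    (ha : ∀ j, (a j : Localization.Away (Ideal.Quotient.mk I P)) =
      algebraMap _ _ (Ideal.Quotient.mk I (X 2 - C (e j))))
    (b₁ b₂ : (Localization.Away (Ideal.Quotient.mk I P))ˣ)
    (hb₁ : (b₁ : Localization.Away (Ideal.Quotient.mk I P)) =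
      algebraMap _ _ (Ideal.Quotient.mk I (X 0)))
    (hb₂ : (b₂ : Localization.Away (Ideal.Quotient.mk I P)) =
      algebraMap _ _ (Ideal.Quotient.mk I (X 1)))
    (N : Subgroup (Localization.Away (Ideal.Quotient.mk I P))ˣ)
    (hN : N = (Units.map
      (((algebraMap (MvPolynomial (Fin 3) K ⧸ I)
          (Localization.Away (Ideal.Quotient.mk I P))).comp
        (algebraMap K (MvPolynomial (Fin 3) K ⧸ I))).toMonoidHom)).range) :
    ∃ φ : ((Fin n → ℤ) × ℤ × ℤ) →+
        Additive ((Localization.Away (Ideal.Quotient.mk I P))ˣ ⧸ N),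
      (∀ j, φ (Pi.single j 1, 0, 0) =
          Additive.ofMul (QuotientGroup.mk (a j) : _ ⧸ N)) ∧
      φ (0, 1, 0) = Additive.ofMul (QuotientGroup.mk b₁ : _ ⧸ N) ∧
      φ (0, 0, 1) = Additive.ofMul (QuotientGroup.mk b₂ : _ ⧸ N) ∧
      Function.Surjective φ ∧
      φ.ker = AddSubgroup.zmultiples (((fun _ => 1) : Fin n → ℤ), (-1 : ℤ), (-1 : ℤ)) :=
  units_mod_constants_of_affine_chatelet_general K c hc.isUnit e he P hP I hI _ a ha b₁ b₂ hb₁ hb₂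
    N hN
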